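/- For every complex number z with |z| < 1, (2√π/Γ(3/4)²)·₂F₁(1/4,1/4;1/2;z²) = ₂F₁(1/2,1/2;1;(1-z)/2) + ₂F₁(1/2,1/2;1;(1+z)/2). -/

import Mathlib

open Complex

/-- The Gauss hypergeometric series `₂F₁(a, b; c; z) = ∑_{n≥0} (a)_n (b)_n / ((c)_n n!) zⁿ`. -/
noncomputable def hyp2F1 (a b c z : ℂ) : ℂ :=
  ∑' n : ℕ, (ascPochhammer ℂ n).eval a * (ascPochhammer ℂ n).eval b /
    ((ascPochhammer ℂ n).eval c * (n.factorial : ℂ)) * z ^ n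

/-!
Re-expanding `F(a, b; c; (1 + x) / 2)` in powers of `x` gives coefficients `D m` which, when
`2c = a + b + 1`, satisfy `(m + 1)(m + 2) D (m + 2) = (m + a)(m + b) D m`. Adding the values at `x`
and `-x` keeps only the even coefficients, which are `D 0` times those of
`F(a/2, b/2; 1/2; x²)`, where `D 0 = F(a, b; c; 1/2)`.

For `b = 1 - a`, the value at `1/2` is a product of Gamma values: it satisfies a contiguity relation
under `c ↦ c + 2` and tends to `1` as `c ↦ c + k` with `k → ∞`, so that iterating the relation
exhibits it as a limit of quotients of Gauss's products for `Γ`.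
-/

open Filter Topology

lemma tsum_eq_tsum_of_sub_eq_succ_sub {G : Type*} [AddCommGroup G] [TopologicalSpace G]
    [IsTopologicalAddGroup G] [T2Space G] {f g s : ℕ → G} (hf : Summable f) (hg : Summable g)
    (hs : Summable s) (hs₀ : s 0 = 0) (h : ∀ n, f n - g n = s (n + 1) - s n) :
    ∑' n, f n = ∑' n, g n := by
  have hs' : ∑' n, s (n + 1) = ∑' n, s n := by rw [hs.tsum_eq_zero_add, hs₀, zero_add]
  rw [← sub_eq_zero, ← hf.tsum_sub hg, tsum_congr h,
    ((summable_nat_add_iff 1).2 hs).tsum_sub hs, hs', sub_self]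

lemma natCast_mul_choose {R : Type*} [CommRing R] (n m : ℕ) :
    (n : R) * n.choose m = (m + 1) * n.choose (m + 1) + m * n.choose m := by
  have h := congrArg (Nat.cast : ℕ → R) (Nat.add_one_mul_choose_eq n m)
  rw [Nat.choose_succ_succ] at h
  push_cast at h
  linear_combination h

section Recentering

variable {𝕜 : Type*} [NormedField 𝕜]

/-- The coefficient of `x ^ m` in `∑ n, u n * (1 + x) ^ n`, re-expanded in powers of `x`. -/
noncomputable def recenteredCoeff (u : ℕ → 𝕜) (m : ℕ) : 𝕜 :=
  ∑' n, u n * n.choose m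

lemma hasSum_choose_mul_pow (x : 𝕜) (n : ℕ) :
    HasSum (fun m ↦ (n.choose m : 𝕜) * x ^ m) ((1 + x) ^ n) := by
  have hsupp (m : ℕ) (hm : m ∉ Finset.range (n + 1)) : (n.choose m : 𝕜) * x ^ m = 0 := by
    simp [Nat.choose_eq_zero_of_lt (by simpa using hm : n < m)]
  simpa [add_comm 1 x, add_pow, mul_comm] using hasSum_sum_of_ne_finset_zero hsupp

lemma summable_mul_choose [CompleteSpace 𝕜] {u : ℕ → 𝕜} {r : ℝ} (hr : 0 < r)
    (hu : Summable fun n ↦ ‖u n‖ * (1 + r) ^ n) (m : ℕ) :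
    Summable fun n ↦ u n * n.choose m := by
  refine .of_norm_bounded (hu.mul_right (r ^ m)⁻¹) fun n ↦ ?_
  have hchoose : (n.choose m : ℝ) * r ^ m ≤ (1 + r) ^ n :=
    le_hasSum (hasSum_choose_mul_pow r n) m fun _ _ ↦ by positivity
  calc ‖u n * n.choose m‖ ≤ ‖u n‖ * n.choose m := by
        rw [norm_mul]; gcongr; simpa using Nat.norm_cast_le (α := 𝕜) (n.choose m)
    _ ≤ ‖u n‖ * ((1 + r) ^ n * (r ^ m)⁻¹) := by gcongr; rwa [le_mul_inv_iff₀ (by positivity)]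
    _ = ‖u n‖ * (1 + r) ^ n * (r ^ m)⁻¹ := by ring

lemma hasSum_recenteredCoeff_mul_pow [CompleteSpace 𝕜] {u : ℕ → 𝕜} {x : 𝕜}
    (hu : Summable fun n ↦ ‖u n‖ * (1 + ‖x‖) ^ n) :
    HasSum (fun m ↦ recenteredCoeff u m * x ^ m) (∑' n, u n * (1 + x) ^ n) := by
  have hrow (n : ℕ) := (hasSum_choose_mul_pow x n).mul_left (u n)
  have hbound (n : ℕ) := (hasSum_choose_mul_pow ‖x‖ n).mul_left ‖u n‖
  have hdouble : Summable (Function.uncurry fun n m ↦ u n * (n.choose m * x ^ m)) := by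
    refine .of_norm_bounded (g := fun p : ℕ × ℕ ↦ ‖u p.1‖ * (p.1.choose p.2 * ‖x‖ ^ p.2))
      ?_ fun p ↦ ?_
    · rw [summable_prod_of_nonneg fun _ ↦ by positivity]
      exact ⟨fun n ↦ (hbound n).summable, by simpa only [(hbound _).tsum_eq] using hu⟩
    · simp only [Function.uncurry, norm_mul, norm_pow]
      gcongr
      simpa using Nat.norm_cast_le (α := 𝕜) (p.1.choose p.2)
  have hcol (m : ℕ) : ∑' n, u n * (n.choose m * x ^ m) = recenteredCoeff u m * x ^ m := by
    simp only [recenteredCoeff, ← tsum_mul_right, mul_assoc]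
  simp only [← hcol, ← fun n ↦ (hrow n).tsum_eq]
  rw [← hdouble.tsum_comm]
  exact hdouble.prod_symm.prod.hasSum

end Recentering

section Coefficients

variable {𝕂 : Type*} [RCLike 𝕂] (a b c : 𝕂)

lemma ordinaryHypergeometricCoefficient_succ (n : ℕ) :
    ordinaryHypergeometricCoefficient a b c (n + 1) =
      (a + n) * (b + n) / ((c + n) * (n + 1)) * ordinaryHypergeometricCoefficient a b c n := by
  simp only [ordinaryHypergeometricCoefficient, ascPochhammer_succ_eval, Nat.factorial_succ,
    Nat.cast_mul, Nat.cast_succ, mul_inv, div_eq_mul_inv]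
  ring

variable {c} in
lemma add_natCast_mul_ordinaryHypergeometricCoefficient_add_one {n : ℕ} (hc₀ : c ≠ 0)
    (hcn : c ≠ -n) :
    (c + n) * ordinaryHypergeometricCoefficient a b (c + 1) n =
      c * ordinaryHypergeometricCoefficient a b c n := by
  have hcn' : c + n ≠ 0 := fun h ↦ hcn (eq_neg_of_add_eq_zero_left h)
  have hpoch : (ascPochhammer 𝕂 n).eval c * (c + n) = c * (ascPochhammer 𝕂 n).eval (c + 1) := by
    rw [← ascPochhammer_succ_eval, ascPochhammer_succ_left]
    simp [Polynomial.eval_comp]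
  have hinv : ((ascPochhammer 𝕂 n).eval c)⁻¹ * c =
      (c + n) * ((ascPochhammer 𝕂 n).eval (c + 1))⁻¹ := by
    rw [eq_div_of_mul_eq hcn' hpoch, inv_div, div_mul_eq_mul_div, mul_comm c,
      mul_div_mul_right _ _ hc₀, div_eq_mul_inv]
  linear_combination -(n.factorial : 𝕂)⁻¹ * (ascPochhammer 𝕂 n).eval a *
    (ascPochhammer 𝕂 n).eval b * hinv

lemma one_le_radius_ordinaryHypergeometricSeries :
    1 ≤ (ordinaryHypergeometricSeries 𝕂 a b c).radius := by
  by_cases h : ∃ k : ℕ, a = -k ∨ b = -k ∨ c = -k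
  · obtain ⟨k, rfl | rfl | rfl⟩ := h
    · simp [ordinaryHypergeometric_radius_top_of_neg_nat₁]
    · simp [ordinaryHypergeometric_radius_top_of_neg_nat₂]
    · simp [ordinaryHypergeometric_radius_top_of_neg_nat₃]
  · push Not at h
    refine (ordinaryHypergeometricSeries_radius_eq_one 𝕂 a b c fun k ↦ ?_).ge
    simpa only [ne_eq, eq_neg_iff_add_eq_zero, add_comm] using h k

lemma summable_norm_ordinaryHypergeometricCoefficient_mul_pow {r : ℝ} (hr₀ : 0 ≤ r) (hr₁ : r < 1) :
    Summable fun n ↦ ‖ordinaryHypergeometricCoefficient a b c n‖ * r ^ n := by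
  lift r to NNReal using hr₀
  have hr : (r : ENNReal) < (ordinaryHypergeometricSeries 𝕂 a b c).radius :=
    lt_of_lt_of_le (by exact_mod_cast hr₁) (one_le_radius_ordinaryHypergeometricSeries a b c)
  simpa [ordinaryHypergeometricSeries] using
    (ordinaryHypergeometricSeries 𝕂 a b c).summable_norm_mul_pow hr

lemma factorial_le_norm_ascPochhammer_eval {s : 𝕂} (hs : 1 ≤ RCLike.re s) (n : ℕ) :
    (n.factorial : ℝ) ≤ ‖(ascPochhammer 𝕂 n).eval s‖ := by
  induction n with
  | zero => simp
  | succ n ih =>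
    have hn : (n + 1 : ℝ) ≤ ‖s + n‖ :=
      calc (n + 1 : ℝ) ≤ RCLike.re (s + n) := by rw [map_add, RCLike.natCast_re]; linarith
        _ ≤ ‖s + n‖ := RCLike.re_le_norm _
    rw [ascPochhammer_succ_eval, norm_mul, Nat.factorial_succ, mul_comm, Nat.cast_mul]
    push_cast
    gcongr

lemma tendsto_ordinaryHypergeometricCoefficient_add_natCast {n : ℕ} (hn : n ≠ 0) :
    Tendsto (fun k : ℕ ↦ ordinaryHypergeometricCoefficient a b (c + k) n) atTop (𝓝 0) := by
  have hdeg : 0 < (ascPochhammer 𝕂 n).degree := by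
    rw [← Polynomial.natDegree_pos_iff_degree_pos, ascPochhammer_natDegree]
    exact hn.bot_lt
  have hnorm : Tendsto (fun k : ℕ ↦ ‖c + k‖) atTop atTop := by
    refine tendsto_atTop_mono (fun k ↦ ?_)
      (tendsto_atTop_add_const_left _ (-‖c‖) tendsto_natCast_atTop_atTop)
    have := norm_sub_le (c + k) c
    rw [add_sub_cancel_left, RCLike.norm_natCast] at this
    linarith
  have hinv := tendsto_inv₀_cobounded.comp
    (tendsto_norm_atTop_iff_cobounded.1 (Polynomial.tendsto_norm_atTop _ hdeg hnorm))
  simpa [ordinaryHypergeometricCoefficient] using hinv.const_mul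
    (((n.factorial : 𝕂)⁻¹ * (ascPochhammer 𝕂 n).eval a) * (ascPochhammer 𝕂 n).eval b)

end Coefficients

lemma hyp2F1_eq_tsum (a b c z : ℂ) :
    hyp2F1 a b c z = ∑' n, ordinaryHypergeometricCoefficient a b c n * z ^ n :=
  tsum_congr fun n ↦ by
    simp only [ordinaryHypergeometricCoefficient, div_eq_mul_inv, mul_inv]
    ring

section EvenPart

/-- The coefficients of `hyp2F1 a b c ((1 + x) / 2)` in powers of `1 + x`. -/
noncomputable def halfCoeff (a b c : ℂ) (n : ℕ) : ℂ :=
  ordinaryHypergeometricCoefficient a b c n * (1 / 2) ^ n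

lemma summable_halfCoeff (a b c : ℂ) {r : ℝ} (hr₀ : 0 ≤ r) (hr₁ : r < 1) :
    Summable fun n ↦ ‖halfCoeff a b c n‖ * (1 + r) ^ n := by
  refine (summable_norm_ordinaryHypergeometricCoefficient_mul_pow a b c
    (r := (1 + r) / 2) (by positivity) (by linarith)).congr fun n ↦ ?_
  rw [halfCoeff, norm_mul _ ((1 / 2 : ℂ) ^ n), norm_pow, norm_div, norm_one, Complex.norm_two,
    div_pow, div_pow]
  ring

lemma summable_halfCoeff_mul_choose (a b c : ℂ) (m : ℕ) :
    Summable fun n ↦ halfCoeff a b c n * n.choose m :=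
  summable_mul_choose (r := 1 / 2) (by norm_num)
    (summable_halfCoeff a b c (by norm_num) (by norm_num)) m

lemma halfCoeff_succ (a b : ℂ) {c : ℂ} {n : ℕ} (hc : c ≠ -n) :
    2 * (c + n) * (n + 1) * halfCoeff a b c (n + 1) = (a + n) * (b + n) * halfCoeff a b c n := by
  have hcn : c + n ≠ 0 := fun h ↦ hc (eq_neg_of_add_eq_zero_left h)
  rw [halfCoeff, halfCoeff, ordinaryHypergeometricCoefficient_succ, pow_succ]
  field_simp

lemma add_natCast_mul_halfCoeff_add_one (a b : ℂ) {c : ℂ} {n : ℕ} (hc₀ : c ≠ 0) (hcn : c ≠ -n) :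
    (c + n) * halfCoeff a b (c + 1) n = c * halfCoeff a b c n := by
  have h := add_natCast_mul_ordinaryHypergeometricCoefficient_add_one a b hc₀ hcn
  simp only [halfCoeff]
  linear_combination (1 / 2) ^ n * h

lemma hasSum_hyp2F1_half_add (a b c : ℂ) {x : ℂ} (hx : ‖x‖ < 1) :
    HasSum (fun m ↦ recenteredCoeff (halfCoeff a b c) m * x ^ m) (hyp2F1 a b c ((1 + x) / 2)) := by
  convert! hasSum_recenteredCoeff_mul_pow (summable_halfCoeff a b c (norm_nonneg x) hx) using 1
  rw [hyp2F1_eq_tsum]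
  refine tsum_congr fun n ↦ ?_
  rw [halfCoeff, div_pow, div_pow]
  ring

lemma recenteredCoeff_halfCoeff_zero (a b c : ℂ) :
    recenteredCoeff (halfCoeff a b c) 0 = hyp2F1 a b c (1 / 2) := by
  simp only [recenteredCoeff, halfCoeff, Nat.choose_zero_right, Nat.cast_one, mul_one,
    hyp2F1_eq_tsum]

lemma recenteredCoeff_halfCoeff_add_two {a b c : ℂ} (habc : 2 * c = a + b + 1)
    (hc : ∀ n : ℕ, c ≠ -n) (m : ℕ) :
    (m + 1) * (m + 2) * recenteredCoeff (halfCoeff a b c) (m + 2) =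
      (m + a) * (m + b) * recenteredCoeff (halfCoeff a b c) m := by
  have hsum := summable_halfCoeff_mul_choose a b c
  simp only [recenteredCoeff, ← tsum_mul_left]
  -- The telescoped term is `-2 (n - m) (c + n - 1) u n * n.choose m` with `u = halfCoeff a b c`,
  -- written so as to be visibly summable.
  refine tsum_eq_tsum_of_sub_eq_succ_sub ((hsum (m + 2)).mul_left _) ((hsum m).mul_left _)
    (s := fun n ↦ -2 * (m + 1) * ((c + m) * (halfCoeff a b c n * n.choose (m + 1)) +
      (m + 2) * (halfCoeff a b c n * n.choose (m + 2))))
    ((((hsum (m + 1)).mul_left _).add ((hsum (m + 2)).mul_left _)).mul_left _) (by simp) fun n ↦ ?_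
  have h₁ : (n - m : ℂ) * n.choose m = (m + 1) * n.choose (m + 1) := by
    linear_combination natCast_mul_choose (R := ℂ) n m
  have h₂ : (n - m - 1 : ℂ) * n.choose (m + 1) = (m + 2) * n.choose (m + 2) := by
    have := natCast_mul_choose (R := ℂ) n (m + 1)
    push_cast at this
    linear_combination this
  have hcur : (m + 1) * ((c + m) * n.choose (m + 1) + (m + 2) * n.choose (m + 2)) =
      (n - m) * (c + n - 1) * n.choose m := by
    linear_combination -(c + n - 1) * h₁ - (m + 1) * h₂
  have hnext : (m + 1) * ((c + m) * (n + 1).choose (m + 1) + (m + 2) * (n + 1).choose (m + 2)) =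
      (c + n) * (n + 1) * n.choose m := by
    simp only [Nat.choose_succ_succ n]
    push_cast
    linear_combination -(c + m + n + 1) * h₁ - (m + 1) * h₂
  have hlast : (m + 1) * (m + 2) * n.choose (m + 2) = (n - m) * (n - m - 1 : ℂ) * n.choose m := by
    linear_combination -(n - m - 1 : ℂ) * h₁ - (m + 1) * h₂
  linear_combination halfCoeff a b c n * hlast - 2 * halfCoeff a b c n * hcur +
    2 * halfCoeff a b c (n + 1) * hnext + n.choose m * halfCoeff_succ a b (hc n) -
    (n - m) * halfCoeff a b c n * n.choose m * habc

lemma recenteredCoeff_halfCoeff_two_mul {a b c : ℂ} (habc : 2 * c = a + b + 1)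
    (hc : ∀ n : ℕ, c ≠ -n) (k : ℕ) :
    recenteredCoeff (halfCoeff a b c) (2 * k) =
      hyp2F1 a b c (1 / 2) * ordinaryHypergeometricCoefficient (a / 2) (b / 2) (1 / 2) k := by
  induction k with
  | zero => simp [recenteredCoeff_halfCoeff_zero, ordinaryHypergeometricCoefficient]
  | succ k ih =>
    have hrec := recenteredCoeff_halfCoeff_add_two habc hc (2 * k)
    have hodd : (2 * k + 1 : ℂ) ≠ 0 := by exact_mod_cast (2 * k).succ_ne_zero
    have heven : (k + 1 : ℂ) ≠ 0 := k.cast_add_one_ne_zero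
    have hhalf : (1 / 2 + k : ℂ) = (2 * k + 1) / 2 := by ring
    rw [ih] at hrec
    push_cast at hrec
    rw [ordinaryHypergeometricCoefficient_succ, mul_add_one, hhalf]
    refine mul_left_cancel₀ (mul_ne_zero hodd (mul_ne_zero two_ne_zero heven)) ?_
    field_simp
    linear_combination hrec

lemma hyp2F1_half_sub_add_hyp2F1_half_add {a b c : ℂ} (habc : 2 * c = a + b + 1)
    (hc : ∀ n : ℕ, c ≠ -n) {z : ℂ} (hz : ‖z‖ < 1) :
    hyp2F1 a b c ((1 - z) / 2) + hyp2F1 a b c ((1 + z) / 2) =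
      2 * hyp2F1 a b c (1 / 2) * hyp2F1 (a / 2) (b / 2) (1 / 2) (z ^ 2) := by
  have hneg := hasSum_hyp2F1_half_add a b c (x := -z) (by rwa [norm_neg])
  have hsum := hneg.add (hasSum_hyp2F1_half_add a b c hz)
  have hodd (m : ℕ) (hm : m ∉ Set.range (2 * ·)) :
      recenteredCoeff (halfCoeff a b c) m * (-z) ^ m +
        recenteredCoeff (halfCoeff a b c) m * z ^ m = 0 := by
    have : Odd m := by
      rw [← Nat.not_even_iff_odd, even_iff_exists_two_mul]
      exact fun ⟨k, hk⟩ ↦ hm ⟨k, hk.symm⟩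
    rw [this.neg_pow, mul_neg, neg_add_cancel]
  have heven := ((mul_right_injective₀ two_ne_zero).hasSum_iff hodd).2 hsum
  rw [sub_eq_add_neg, ← heven.tsum_eq, hyp2F1_eq_tsum (z := z ^ 2), ← tsum_mul_left]
  refine tsum_congr fun k ↦ ?_
  rw [Function.comp_apply, recenteredCoeff_halfCoeff_two_mul habc hc, pow_mul, pow_mul, neg_sq]
  ring

end EvenPart

section Bailey

lemma tendsto_hyp2F1_add_natCast (a b c : ℂ) {x : ℂ} (hx : ‖x‖ < 1) :
    Tendsto (fun k : ℕ ↦ hyp2F1 a b (c + k) x) atTop (𝓝 1) := by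
  have hlim (n : ℕ) : Tendsto (fun k : ℕ ↦ ordinaryHypergeometricCoefficient a b (c + k) n * x ^ n)
      atTop (𝓝 (if n = 0 then 1 else 0)) := by
    split_ifs with hn
    · simp [hn, ordinaryHypergeometricCoefficient]
    · simpa using
        (tendsto_ordinaryHypergeometricCoefficient_add_natCast a b c hn).mul_const (x ^ n)
  have hbound : ∀ᶠ k : ℕ in atTop, ∀ n, ‖ordinaryHypergeometricCoefficient a b (c + k) n * x ^ n‖ ≤
      ‖ordinaryHypergeometricCoefficient a b 1 n‖ * ‖x‖ ^ n := by
    filter_upwards [eventually_ge_atTop ⌈1 - c.re⌉₊] with k hk n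
    have hre : 1 ≤ (c + k).re := by
      have := Nat.ceil_le.1 hk
      simp only [add_re, natCast_re]
      linarith
    simp only [ordinaryHypergeometricCoefficient, norm_mul, norm_pow, norm_inv,
      ascPochhammer_eval_one, Complex.norm_natCast]
    gcongr
    exact factorial_le_norm_ascPochhammer_eval hre n
  simpa only [← hyp2F1_eq_tsum, tsum_ite_eq] using tendsto_tsum_of_dominated_convergence
    (summable_norm_ordinaryHypergeometricCoefficient_mul_pow a b 1 (norm_nonneg x) hx) hlim hbound

lemma inv_GammaSeq (s : ℂ) (n : ℕ) :
    (GammaSeq s n)⁻¹ = (ascPochhammer ℂ (n + 1)).eval s / ((n : ℂ) ^ s * n.factorial) := by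
  have hprod (k : ℕ) : (ascPochhammer ℂ k).eval s = ∏ j ∈ Finset.range k, (s + j) := by
    induction k with
    | zero => simp
    | succ k ih => rw [ascPochhammer_succ_eval, ih, Finset.prod_range_succ]
  rw [GammaSeq, inv_div, hprod]

lemma tendsto_inv_GammaSeq (s : ℂ) :
    Tendsto (fun n ↦ (GammaSeq s n)⁻¹) atTop (𝓝 (Gamma s)⁻¹) := by
  by_cases hs : Gamma s = 0
  · obtain ⟨m, rfl⟩ := (Gamma_eq_zero_iff s).1 hs
    rw [hs, inv_zero]
    refine tendsto_const_nhds.congr' ?_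
    filter_upwards [eventually_ge_atTop m] with n hn
    rw [inv_GammaSeq, (ascPochhammer_eval_eq_zero_iff _ _).2 ⟨m, by lia, by simp⟩, zero_div]
  · exact (GammaSeq_tendsto_Gamma s).inv₀ hs

lemma add_natCast_ne_neg_natCast {c : ℂ} (hc : ∀ n : ℕ, c ≠ -n) (k n : ℕ) : c + k ≠ -n :=
  fun h ↦ hc (n + k) (by push_cast; linear_combination h)

lemma hyp2F1_one_sub_half_contiguous (a : ℂ) {c : ℂ} (hc : ∀ n : ℕ, c ≠ -n) :
    c * (c + 1) * hyp2F1 a (1 - a) c (1 / 2) =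
      (c + a) * (c + 1 - a) * hyp2F1 a (1 - a) (c + 2) (1 / 2) := by
  have hsum := summable_halfCoeff_mul_choose a (1 - a)
  have hc₁ (n : ℕ) : c + 1 ≠ -n := by exact_mod_cast add_natCast_ne_neg_natCast hc 1 n
  simp only [← recenteredCoeff_halfCoeff_zero, recenteredCoeff, ← tsum_mul_left]
  refine tsum_eq_tsum_of_sub_eq_succ_sub ((hsum c 0).mul_left _) ((hsum (c + 2) 0).mul_left _)
    (s := fun n ↦ -2 * (c + 1) * (halfCoeff a (1 - a) (c + 1) n * n.choose 1))
    ((hsum (c + 1) 1).mul_left _) (by simp) fun n ↦ ?_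
  have h₀ := add_natCast_mul_halfCoeff_add_one a (1 - a) (by simpa using hc 0) (hc n)
  have h₁ := add_natCast_mul_halfCoeff_add_one a (1 - a) (by simpa using hc₁ 0) (hc₁ n)
  have hsucc : 2 * (c + 1) * (n + 1) * halfCoeff a (1 - a) (c + 1) (n + 1) =
      (a + n) * (1 - a + n) * halfCoeff a (1 - a) (c + 2) n := by
    refine mul_left_cancel₀ (fun h ↦ hc₁ n (eq_neg_of_add_eq_zero_left h) : c + 1 + n ≠ 0) ?_
    rw [add_assoc c 1 1, one_add_one_eq_two] at h₁
    linear_combination (c + 1) * halfCoeff_succ a (1 - a) (hc₁ n) - (a + n) * (1 - a + n) * h₁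
  rw [add_assoc c 1 1, one_add_one_eq_two] at h₁
  simp only [Nat.choose_zero_right, Nat.choose_one_right]
  push_cast
  linear_combination -(c + 1) * h₀ - (c - n) * h₁ + hsucc

lemma hyp2F1_one_sub_half_mul_ascPochhammer (a : ℂ) {c : ℂ} (hc : ∀ n : ℕ, c ≠ -n) (k : ℕ) :
    (ascPochhammer ℂ k).eval (c / 2) * (ascPochhammer ℂ k).eval ((c + 1) / 2) *
        hyp2F1 a (1 - a) c (1 / 2) =
      (ascPochhammer ℂ k).eval ((c + a) / 2) * (ascPochhammer ℂ k).eval ((c + 1 - a) / 2) *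
        hyp2F1 a (1 - a) (c + (2 * k : ℕ)) (1 / 2) := by
  induction k with
  | zero => simp
  | succ k ih =>
    have hstep := hyp2F1_one_sub_half_contiguous a (add_natCast_ne_neg_natCast hc (2 * k))
    rw [mul_add_one, Nat.cast_add, ← add_assoc, Nat.cast_ofNat]
    simp only [ascPochhammer_succ_eval]
    push_cast at hstep ih ⊢
    linear_combination (c / 2 + k) * ((c + 1) / 2 + k) * ih +
      (ascPochhammer ℂ k).eval ((c + a) / 2) * (ascPochhammer ℂ k).eval ((c + 1 - a) / 2) / 4 *
        hstep

lemma inv_GammaSeq_mul_hyp2F1_one_sub_half (a : ℂ) {c : ℂ} (hc : ∀ n : ℕ, c ≠ -n) {n : ℕ}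
    (hn : n ≠ 0) :
    (GammaSeq (c / 2) n)⁻¹ * (GammaSeq ((c + 1) / 2) n)⁻¹ * hyp2F1 a (1 - a) c (1 / 2) =
      (GammaSeq ((c + a) / 2) n)⁻¹ * (GammaSeq ((c + 1 - a) / 2) n)⁻¹ *
        hyp2F1 a (1 - a) (c + (2 * (n + 1) : ℕ)) (1 / 2) := by
  have hpow : (n : ℂ) ^ (c / 2) * n ^ ((c + 1) / 2) =
      n ^ ((c + a) / 2) * n ^ ((c + 1 - a) / 2) := by
    rw [← cpow_add _ _ (Nat.cast_ne_zero.2 hn), ← cpow_add _ _ (Nat.cast_ne_zero.2 hn)]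
    ring_nf
  have hiter := hyp2F1_one_sub_half_mul_ascPochhammer a hc (n + 1)
  rw [inv_GammaSeq, inv_GammaSeq, inv_GammaSeq, inv_GammaSeq, div_mul_div_comm,
    div_mul_div_comm, mul_mul_mul_comm, hpow, div_mul_eq_mul_div, hiter, div_mul_eq_mul_div,
    mul_mul_mul_comm]

/-- Bailey's summation theorem (DLMF 15.4.30), with the duplication formula applied to `Γ c`. -/
theorem hyp2F1_one_sub_half_eq_Gamma_div (a : ℂ) {c : ℂ} (hc : ∀ n : ℕ, c ≠ -n) :
    hyp2F1 a (1 - a) c (1 / 2) =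
      Gamma (c / 2) * Gamma ((c + 1) / 2) / (Gamma ((c + a) / 2) * Gamma ((c + 1 - a) / 2)) := by
  have hΓ₀ : Gamma (c / 2) ≠ 0 := Gamma_ne_zero fun m h ↦
    hc (2 * m) (by push_cast; linear_combination 2 * h)
  have hΓ₁ : Gamma ((c + 1) / 2) ≠ 0 := Gamma_ne_zero fun m h ↦
    hc (2 * m + 1) (by push_cast; linear_combination 2 * h)
  have hindex : Tendsto (fun n : ℕ ↦ 2 * (n + 1)) atTop atTop :=
    tendsto_atTop_mono (fun n ↦ show n ≤ 2 * (n + 1) by lia) tendsto_id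
  have hleft := ((tendsto_inv_GammaSeq (c / 2)).mul
    (tendsto_inv_GammaSeq ((c + 1) / 2))).mul_const (hyp2F1 a (1 - a) c (1 / 2))
  have hright := ((tendsto_inv_GammaSeq ((c + a) / 2)).mul
    (tendsto_inv_GammaSeq ((c + 1 - a) / 2))).mul
      ((tendsto_hyp2F1_add_natCast a (1 - a) c (x := 1 / 2) (by norm_num)).comp hindex)
  have hlim := tendsto_nhds_unique_of_eventuallyEq hleft hright <|
    (eventually_ne_atTop 0).mono fun _ ↦ inv_GammaSeq_mul_hyp2F1_one_sub_half a hc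
  rw [mul_one, ← mul_inv, ← mul_inv] at hlim
  rw [div_eq_mul_inv _ (_ * _), ← hlim, mul_inv_cancel_left₀ (mul_ne_zero hΓ₀ hΓ₁)]

end Bailey

/-- DLMF 15.8.27 with `b = 1/2 - a`. As `Gamma` is `0` at its poles, dividing by it is multiplying
by the entire function `1/Γ`. -/
theorem hyp2F1_quadratic_transformation_sum_general (a z : ℂ) (hz : ‖z‖ < 1) :
    (2 * (Real.sqrt Real.pi : ℂ) / (Gamma (a + 1 / 2) * Gamma (1 - a))) *
      hyp2F1 a (1 / 2 - a) (1 / 2) (z ^ 2) =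
    hyp2F1 (2 * a) (1 - 2 * a) 1 ((1 - z) / 2) + hyp2F1 (2 * a) (1 - 2 * a) 1 ((1 + z) / 2) := by
  have hone (n : ℕ) : (1 : ℂ) ≠ -n := fun h ↦
    n.cast_add_one_ne_zero (R := ℂ) (by linear_combination h)
  have hΓhalf : Gamma (1 / 2) = (Real.sqrt Real.pi : ℂ) := by
    rw [← Real.Gamma_one_half_eq, ← Gamma_ofReal]
    norm_num
  have hparam₁ : (1 + 2 * a) / 2 = a + 1 / 2 := by ring
  have hparam₂ : (1 + 1 - 2 * a) / 2 = 1 - a := by ring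
  have hparam₃ : (1 - 2 * a) / 2 = 1 / 2 - a := by ring
  rw [hyp2F1_half_sub_add_hyp2F1_half_add (by ring) hone hz,
    hyp2F1_one_sub_half_eq_Gamma_div (2 * a) hone, hparam₁, hparam₂, hparam₃,
    mul_div_cancel_left₀ a two_ne_zero, one_add_one_eq_two, div_self two_ne_zero, Gamma_one,
    mul_one, hΓhalf, mul_div_assoc]

/-- The quadratic transformation (DLMF 15.8.27 with `a = b = 1/4`): for `|z| < 1`,
`(2√π/Γ(3/4)²) ₂F₁(1/4,1/4;1/2;z²) = ₂F₁(1/2,1/2;1;(1-z)/2) + ₂F₁(1/2,1/2;1;(1+z)/2)`. -/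
theorem hyp2F1_quadratic_transformation_sum (z : ℂ) (hz : ‖z‖ < 1) :
    (2 * (Real.sqrt Real.pi : ℂ) / (Complex.Gamma (3/4)) ^ 2) *
      hyp2F1 (1/4) (1/4) (1/2) (z ^ 2) =
    hyp2F1 (1/2) (1/2) 1 ((1 - z) / 2) + hyp2F1 (1/2) (1/2) 1 ((1 + z) / 2) := by
  convert hyp2F1_quadratic_transformation_sum_general (1 / 4) z hz using 3 <;> norm_num [sq]
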